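/- arXiv:2301.04262 — 4 statements merged into one kernel-verified Lean document; each statement's English description precedes it below -/
import Mathlib

section
/- Let R be a Noetherian integrally closed integral domain (a normal Noetherian domain) and M a finitely generated R-module. Then the following are equivalent: (a) M satisfies Serre's condition (S2), i.e. for every prime ideal p of R and every natural number i < min(2, height p), the i-th local cohomology module of the localized module M_p over the local ring R_p, taken with respect to the maximal ideal of R_p, vanishes; (b) the evaluation map ev_M : M → Hom_R(Hom_R(M,R),R) is bijective. -/
/-!
Write `m` for the maximal ideal of `A = R_p` and recall that `H^i_m(N)` is the filtered colimit of
the modules `Ext^i(A / m^t, N)`. Only `i = 0, 1` matter, and there the colimit has an elementary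
meaning. If `H^0_m(N) = 0`, no nonzero element of `N` is killed by `m`. If `H^1_m(N) = 0`, every
linear map `f : m^t → N` becomes, after restriction to some smaller power `m^s`, multiplication by
an element of `N`. In the other direction, `H^0_m(N) = 0` if no nonzero element is killed by a power
of `m`, and `H^1_m(N) = 0` if every linear map `m^t → N` is multiplication by an element of `N`.
These facts (`eq_zero_of_subsingleton`, `exists_eq_smul_of_subsingleton`,
`subsingleton_localCohomology_zero`, `subsingleton_localCohomology_one`) are all that is used about
local cohomology.

*Reflexive implies (S2).* A reflexive module is torsion-free, which settles `i = 0`. Let the height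
of `p` be at least two. By normality a fraction `q` with `q m ⊆ A` lies in `A`: either `q m ⊆ m` and
`q` is integral over `A`, or `m` is principal, which Krull's principal ideal theorem forbids. Hence
each linear map `m^t → A` is multiplication by an element of `A` (`exists_eq_mul`). For
`f : m^t → M_p` and `l ∈ M*`, the composite of `f` with the localization of `l` is thus
multiplication by some `y_l`; the map `l ↦ y_l` is linear on `M*`, so up to a denominator it is an
element of `M**`, that is, of `M`, and `f` is multiplication by the resulting element of `M_p`.

*(S2) implies reflexive.* An associated prime `p` of `M` has `H^0_m(M_p) ≠ 0`, so `M` has no nonzero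
associated prime and is torsion-free; a torsion-free finite module over a domain embeds in its
bidual. If the cokernel of `M → M**` is nonzero, it contains the class of some `φ` whose annihilator
is a prime `p`, and it suffices to find `u ∉ p` such that `u φ` comes from `M`. If `p` has height at
most one, `R_p` is a principal ideal ring, `M_p` is free, and a basis with its coordinates gives
such a `u` after clearing denominators (`exists_smul_mem_range_of_height_le_one`). Otherwise
`a ↦ a φ` is a map `m → M_p`, and the vanishing of `H^1_m(M_p)` shows that `φ / 1` comes from `M_p`
(`exists_smul_mem_range_of_subsingleton`).
-/

universe u

/-! ### Ext of modules computed by projective resolutions -/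

section Homological

open CategoryTheory Limits Opposite

variable {R : Type u} [CommRing R]

/-- The cochain map `Hom(Q, Y) ⟶ Hom(P, Y)` given by precomposition with a chain map `φ : P ⟶ Q`. -/
def homDualMap {P Q : ChainComplex (ModuleCat.{u} R) ℕ} (φ : P ⟶ Q) (Y : ModuleCat.{u} R) :
    Q.linearYonedaObj R Y ⟶ P.linearYonedaObj R Y :=
  (HomologicalComplex.unopFunctor _ _).map
    (((((linearYoneda R (ModuleCat.{u} R)).obj Y).rightOp.mapHomologicalComplex _).map φ).op)

theorem paste_squares {C : Type*} [Category C] {A B A' B' A'' B'' : C} {m : A ⟶ B} {i' : B ⟶ B'}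
    {i : A ⟶ A'} {k : A' ⟶ B'} {j : A' ⟶ A''} {l : A'' ⟶ B''} {j' : B' ⟶ B''}
    (h : m ≫ i' = i ≫ k) (h2 : j ≫ l = k ≫ j') : m ≫ (i' ≫ j') = (i ≫ j) ≫ l := by
  rw [← Category.assoc, h, Category.assoc, ← h2, Category.assoc]

/-- The isomorphism of `Ext` with the cohomology of `Hom(P, Y)`, for a projective resolution `P`, is
natural in the first variable. -/
theorem isoExt_naturality {X X' : ModuleCat.{u} R} (f : X' ⟶ X) (P' : ProjectiveResolution X')
    (P : ProjectiveResolution X) (φ : P'.complex ⟶ P.complex)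
    (comm : φ.f 0 ≫ P.π.f 0 = P'.π.f 0 ≫ f) (n : ℕ) (Y : ModuleCat.{u} R) :
    ((Ext R (ModuleCat.{u} R) n).map f.op).app Y ≫ (P'.isoExt n Y).hom =
      (P.isoExt n Y).hom ≫ HomologicalComplex.homologyMap (homDualMap φ Y) n :=
  paste_squares
    (congrArg Quiver.Hom.unop (ProjectiveResolution.isoLeftDerivedObj_inv_naturality f P' P φ comm
      ((linearYoneda R (ModuleCat.{u} R)).obj Y).rightOp n))
    (congrArg Quiver.Hom.unop (ShortComplex.homologyOpIso_inv_naturality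
      ((HomologicalComplex.shortComplexFunctor _ _ n).map (homDualMap φ Y))))

theorem exists_iCycles_eq (S : ShortComplex (ModuleCat.{u} R)) (x : S.X₂) (hx : S.g x = 0) :
    ∃ z : S.cycles, S.iCycles z = x := by
  refine ⟨S.moduleCatCyclesIso.inv (⟨x, hx⟩ : LinearMap.ker S.g.hom), ?_⟩
  exact congr($(S.moduleCatCyclesIso_inv_iCycles).hom (⟨x, hx⟩ : LinearMap.ker S.g.hom))

theorem exists_of_homologyπ_eq_zero (S : ShortComplex (ModuleCat.{u} R)) (z : S.cycles)
    (hz : S.homologyπ z = 0) : ∃ y : S.X₁, S.f y = S.iCycles z := by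
  have h := congr($(S.π_moduleCatCyclesIso_hom).hom z)
  simp only [ModuleCat.hom_comp, LinearMap.comp_apply, hz, map_zero] at h
  have h2 := (Submodule.Quotient.mk_eq_zero _).1 h.symm
  obtain ⟨y, hy⟩ := h2
  refine ⟨y, ?_⟩
  have h3 := congrArg Subtype.val hy
  have h4 := congr($(S.moduleCatCyclesIso_hom_i).hom z)
  exact h3.trans h4

/-- A cocycle `g` on a projective resolution `P` of `X` has a class in `Ext^n(X, Y)`; if pulling
back along `f : X' ⟶ X` kills this class, then `g` becomes a coboundary along every lift of `f` to
resolutions. -/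
theorem exists_class {X : ModuleCat.{u} R}
    (P : ProjectiveResolution X) (n : ℕ) (Y : ModuleCat.{u} R)
    (g : P.complex.X n ⟶ Y) (hg : P.complex.d (n + 1) n ≫ g = 0) :
    ∃ c : ((Ext R (ModuleCat.{u} R) n).obj (op X)).obj Y,
      ∀ {X' : ModuleCat.{u} R} (f : X' ⟶ X) (P' : ProjectiveResolution X')
        (φ : P'.complex ⟶ P.complex) (_ : φ.f 0 ≫ P.π.f 0 = P'.π.f 0 ≫ f),
        ((Ext R (ModuleCat.{u} R) n).map f.op).app Y c = 0 →
          ∃ h : P'.complex.X ((ComplexShape.up ℕ).prev n) ⟶ Y,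
            φ.f n ≫ g = P'.complex.d _ _ ≫ h := by
  obtain ⟨z, hz⟩ : ∃ z : (P.complex.linearYonedaObj R Y).cycles n,
      (P.complex.linearYonedaObj R Y).iCycles n z = g := by
    refine exists_iCycles_eq ((P.complex.linearYonedaObj R Y).sc n) g ?_
    have := (P.complex.linearYonedaObj_d R Y n ((ComplexShape.up ℕ).next n))
    change (P.complex.linearYonedaObj R Y).d n ((ComplexShape.up ℕ).next n) g = 0
    rw [this]
    have key : ∀ k, k = n + 1 → P.complex.d k n ≫ g = 0 := by rintro k rfl; exact hg
    exact key _ (CochainComplex.next ℕ n)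
  refine ⟨(P.isoExt n Y).inv ((P.complex.linearYonedaObj R Y).homologyπ n z), ?_⟩
  intro X' f P' φ comm h0
  have h1 : HomologicalComplex.homologyMap (homDualMap φ Y) n
      ((P.complex.linearYonedaObj R Y).homologyπ n z) = 0 := by
    have := congrArg (fun F ↦ F.hom
      ((P.isoExt n Y).inv ((P.complex.linearYonedaObj R Y).homologyπ n z)))
      (isoExt_naturality f P' P φ comm n Y)
    simpa [h0] using this.symm
  have h2 : (P'.complex.linearYonedaObj R Y).homologyπ n
      (HomologicalComplex.cyclesMap (homDualMap φ Y) n z) = 0 := by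
    rw [← h1]
    exact congr($((HomologicalComplex.homologyπ_naturality (homDualMap φ Y) n).symm).hom z)
  obtain ⟨h, hh⟩ := exists_of_homologyπ_eq_zero _ _ h2
  refine ⟨h, ?_⟩
  have h3 := congr($(HomologicalComplex.cyclesMap_i (homDualMap φ Y) n).hom z)
  refine Eq.trans ?_ (h3.symm.trans hh.symm)
  exact congrArg (fun w ↦ φ.f n ≫ w) hz.symm

/-- `Ext^n(X, Y)` vanishes if every cocycle on some projective resolution is a coboundary. -/
theorem subsingleton_ext {X : ModuleCat.{u} R}
    (P : ProjectiveResolution X) (n : ℕ) (Y : ModuleCat.{u} R)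
    (H : ∀ g : P.complex.X n ⟶ Y, P.complex.d (n + 1) n ≫ g = 0 →
       ∃ h : P.complex.X ((ComplexShape.up ℕ).prev n) ⟶ Y, g = P.complex.d _ _ ≫ h) :
    Subsingleton (((Ext R (ModuleCat.{u} R) n).obj (op X)).obj Y) := by
  rw [← ModuleCat.isZero_iff_subsingleton]
  refine IsZero.of_iso ?_ (P.isoExt n Y)
  rw [← HomologicalComplex.exactAt_iff_isZero_homology, HomologicalComplex.exactAt_iff,
    ShortComplex.moduleCat_exact_iff]
  intro g hg
  obtain ⟨h, hh⟩ := H g (by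
    have := (P.complex.linearYonedaObj_d R Y n ((ComplexShape.up ℕ).next n))
    change (P.complex.linearYonedaObj R Y).d n ((ComplexShape.up ℕ).next n) g = 0 at hg
    rw [this] at hg
    have key : ∀ k, n + 1 = k → P.complex.d k n ≫ g = 0 → P.complex.d (n + 1) n ≫ g = 0 := by
      rintro k rfl; exact id
    exact key _ (CochainComplex.next ℕ n).symm hg)
  exact ⟨h, hh.symm⟩

/-! ### Local cohomology in degrees zero and one -/

/-- The cocone with point `H^i_J(Y)` over the modules `Ext^i(R / J^t, Y)`, obtained by evaluating
at `Y` the colimit cocone of functors that defines local cohomology. -/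
noncomputable def lcCocone (J : Ideal R) (i : ℕ) (Y : ModuleCat.{u} R) :
    Cocone (localCohomology.diagram (localCohomology.idealPowersDiagram J) i ⋙
      (evaluation _ _).obj Y) :=
  ((evaluation _ _).obj Y).mapCocone
    (colimit.cocone (localCohomology.diagram (localCohomology.idealPowersDiagram J) i))

/-- `H^i_J(Y)` is the colimit of the modules `Ext^i(R / J^t, Y)`. -/
noncomputable def lcIsColimit (J : Ideal R) (i : ℕ) (Y : ModuleCat.{u} R) :
    IsColimit (lcCocone J i Y) :=
  isColimitOfPreserves _ (colimit.isColimit _)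

theorem subsingleton_localCohomology (J : Ideal R) (i : ℕ) (Y : ModuleCat.{u} R)
    (H : ∀ t : ℕ, Subsingleton
      (((Ext R (ModuleCat.{u} R) i).obj (op (ModuleCat.of R (R ⧸ J ^ t)))).obj Y)) :
    Subsingleton ((localCohomology J i).obj Y) := by
  rw [← ModuleCat.isZero_iff_subsingleton]
  rw [IsZero.iff_id_eq_zero]
  refine (lcIsColimit J i Y).hom_ext fun j ↦ ?_
  have := ModuleCat.isZero_iff_subsingleton.2 (H j.unop.unop)
  exact this.eq_of_src _ _

/-- If `H^i_J(Y) = 0`, every class in `Ext^i(R / J^t, Y)` dies in some `Ext^i(R / J^s, Y)`, since the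
colimit is filtered. -/
theorem exists_map_eq_zero (J : Ideal R) (i : ℕ) (Y : ModuleCat.{u} R)
    (H : Subsingleton ((localCohomology J i).obj Y)) (t : ℕ)
    (c : ((Ext R (ModuleCat.{u} R) i).obj (op (ModuleCat.of R (R ⧸ J ^ t)))).obj Y) :
    ∃ (s : ℕ) (hs : t ≤ s), ((Ext R (ModuleCat.{u} R) i).map
      (ModuleCat.ofHom (Submodule.mapQ _ _ LinearMap.id (Ideal.pow_le_pow_right hs) :
        (R ⧸ J ^ s) →ₗ[R] (R ⧸ J ^ t))).op).app Y c = 0 := by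
  have : PreservesFilteredColimitsOfSize.{0, 0} (forget (ModuleCat.{u} R)) :=
    preservesFilteredColimitsOfSize_shrink _
  obtain ⟨k, f, g, h⟩ := Concrete.isColimit_exists_of_rep_eq _ (lcIsColimit J i Y)
    (i := op (op t)) (j := op (op t)) c 0 (H.elim _ _)
  refine ⟨k.unop.unop, f.unop.unop.down.down, ?_⟩
  rw [map_zero] at h
  exact h

/-- Degree zero of a projective resolution `P` of `R ⧸ I` can be compared with `R` itself: the
augmentation `ε : P₀ → R ⧸ I` lifts to `α : P₀ → R`, and the quotient map `R → R ⧸ I` lifts to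
`β : R → P₀`. In this way cochains on `P` are exchanged with linear maps on `I` although `P` is
arbitrary. -/
theorem exists_lifts (I : Ideal R) (P : ProjectiveResolution (ModuleCat.of R (R ⧸ I))) :
    ∃ (ε : P.complex.X 0 →ₗ[R] R ⧸ I) (α : P.complex.X 0 →ₗ[R] R) (β : R →ₗ[R] P.complex.X 0),
      (∀ p, ε p = (P.π.f 0).hom p) ∧ (∀ p, Ideal.Quotient.mk I (α p) = ε p) ∧
      (∀ r, ε (β r) = Ideal.Quotient.mk I r) ∧ (∀ p, ε p = 0 ↔ ∃ q, P.complex.d 1 0 q = p) := by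
  let ε : P.complex.X 0 →ₗ[R] R ⧸ I := (P.π.f 0).hom
  have hP : Module.Projective R (P.complex.X 0) :=
    (IsProjective.iff_projective (P.complex.X 0)).2 (P.projective 0)
  have hε : Function.Surjective ε := (ModuleCat.epi_iff_surjective (P.π.f 0)).1 inferInstance
  obtain ⟨α, hα⟩ := Module.projective_lifting_property (Submodule.mkQ I) ε
    (Submodule.mkQ_surjective _)
  obtain ⟨β, hβ⟩ := Module.projective_lifting_property ε (Submodule.mkQ I) hε
  refine ⟨ε, α, β, fun _ ↦ rfl, fun p ↦ congr($hα p), fun r ↦ congr($hβ r),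
    fun p ↦ ⟨fun hp ↦ ?_, ?_⟩⟩
  · exact (ShortComplex.moduleCat_exact_iff _).1 P.exact₀ p hp
  · rintro ⟨q, rfl⟩
    exact congr($(P.complex_d_comp_π_f_zero).hom q)

theorem exact_one {X : ModuleCat.{u} R} (P : ProjectiveResolution X) (p : P.complex.X 1)
    (hp : P.complex.d 1 0 p = 0) : ∃ q, P.complex.d 2 1 q = p :=
  (ShortComplex.moduleCat_exact_iff _).1 (P.exact_succ 0) p hp

/-- `H^1_J(N)` vanishes if every linear map `J^t → N` is multiplication by an element of `N`: a
`1`-cocycle on a resolution of `R ⧸ J^t` factors through the boundaries `B ⊆ P₀`, hence gives a map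
`J^t → B → N` through `β`; if that is multiplication by `x`, the cocycle is the coboundary of
`α(-) x` plus a correction term on `B`. -/
theorem subsingleton_localCohomology_one (J : Ideal R) (N : Type u) [AddCommGroup N] [Module R N]
    (H : ∀ (t : ℕ) (f : ↥(J ^ t) →ₗ[R] N), ∃ x : N, ∀ r, f r = (r : R) • x) :
    Subsingleton ((localCohomology J 1).obj (ModuleCat.of R N)) := by
  refine subsingleton_localCohomology J 1 _ fun t ↦ ?_
  let P := projectiveResolution (ModuleCat.of R (R ⧸ J ^ t))
  refine subsingleton_ext P 1 _ fun g hg ↦ ?_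
  rw [show (ComplexShape.up ℕ).prev 1 = 0 from CochainComplex.prev_nat_succ 0]
  obtain ⟨ε, α, β, -, hα, hβ, hex⟩ := exists_lifts (J ^ t) P
  -- `g` descends to the image of `d 1 0`
  obtain ⟨k, hk⟩ : ∃ k : LinearMap.range (P.complex.d 1 0).hom →ₗ[R] N,
      ∀ q, k ⟨P.complex.d 1 0 q, q, rfl⟩ = g q := by
    have hker : LinearMap.ker (P.complex.d 1 0).hom ≤ LinearMap.ker g.hom := by
      intro p hp
      obtain ⟨q, rfl⟩ := exact_one P p hp
      exact congr($(hg).hom q)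
    refine ⟨(Submodule.liftQ _ g.hom hker) ∘ₗ
      (P.complex.d 1 0).hom.quotKerEquivRange.symm.toLinearMap, fun q ↦ ?_⟩
    have : (P.complex.d 1 0).hom.quotKerEquivRange.symm ⟨P.complex.d 1 0 q, q, rfl⟩ =
       Submodule.Quotient.mk q := by
      rw [LinearEquiv.symm_apply_eq]; rfl
    simp only [LinearMap.comp_apply, LinearEquiv.coe_coe, this]
    rfl
  have hmem : ∀ p, ε p = 0 → p ∈ LinearMap.range (P.complex.d 1 0).hom := fun p hp ↦ (hex p).1 hp
  obtain ⟨x, hx⟩ := H t (k ∘ₗ (β ∘ₗ (J ^ t).subtype).codRestrict _ (fun r ↦ hmem _ (by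
    simp only [LinearMap.comp_apply, hβ]; exact Ideal.Quotient.eq_zero_iff_mem.2 r.2)))
  let δ : P.complex.X 0 →ₗ[R] LinearMap.range (P.complex.d 1 0).hom :=
    (LinearMap.id - β ∘ₗ α).codRestrict _ (fun p ↦ hmem _ (by simp [hβ, hα]))
  refine ⟨ModuleCat.ofHom (α.smulRight x + k ∘ₗ δ), ?_⟩
  ext q
  have hq : α (P.complex.d 1 0 q) ∈ J ^ t := by
    rw [← Ideal.Quotient.eq_zero_iff_mem, hα]
    exact (hex _).2 ⟨q, rfl⟩
  have h1 := hx ⟨_, hq⟩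
  simp only [LinearMap.comp_apply] at h1
  change g q = α (P.complex.d 1 0 q) • x + k (δ (P.complex.d 1 0 q))
  rw [← h1, ← map_add, ← hk]
  congr 1
  ext
  simp [δ]

/-- If `H^1_J(N) = 0`, every linear map `f : J^t → N` agrees on some `J^s ⊆ J^t` with multiplication
by an element of `N`. The map `f` gives a `1`-cocycle on a resolution of `R ⧸ J^t`, whose pullback to
a resolution of some `R ⧸ J^s` is the coboundary of a map `h`. -/
theorem exists_eq_smul_of_subsingleton (J : Ideal R) (N : Type u) [AddCommGroup N] [Module R N]
    (H : Subsingleton ((localCohomology J 1).obj (ModuleCat.of R N))) (t : ℕ)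
    (f : ↥(J ^ t) →ₗ[R] N) :
    ∃ (s : ℕ) (hs : t ≤ s) (x : N), ∀ (r : R) (hr : r ∈ J ^ s),
      f ⟨r, Ideal.pow_le_pow_right hs hr⟩ = r • x := by
  let Q := projectiveResolution (ModuleCat.of R (R ⧸ J ^ t))
  obtain ⟨ε, α, β, hε, hα, hβ, hex⟩ := exists_lifts (J ^ t) Q
  have hmem : ∀ q, α (Q.complex.d 1 0 q) ∈ J ^ t := fun q ↦ by
    rw [← Ideal.Quotient.eq_zero_iff_mem, hα]
    exact (hex _).2 ⟨q, rfl⟩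
  let g : Q.complex.X 1 →ₗ[R] N := f ∘ₗ (α ∘ₗ (Q.complex.d 1 0).hom).codRestrict (J ^ t) hmem
  have hg : Q.complex.d 2 1 ≫ ModuleCat.ofHom g = 0 := by
    ext q
    have h0 : Q.complex.d 1 0 (Q.complex.d 2 1 q) = 0 := congr($(Q.complex.d_comp_d 2 1 0).hom q)
    change f ⟨α (Q.complex.d 1 0 (Q.complex.d 2 1 q)), _⟩ = 0
    rw [← map_zero f]
    congr 1
    ext
    simp [h0]
  obtain ⟨c, hc⟩ := exists_class Q 1 (ModuleCat.of R N) (ModuleCat.ofHom g) hg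
  obtain ⟨s, hs, hs0⟩ := exists_map_eq_zero J 1 (ModuleCat.of R N) H t c
  let P := projectiveResolution (ModuleCat.of R (R ⧸ J ^ s))
  let pr : ModuleCat.of R (R ⧸ J ^ s) ⟶ ModuleCat.of R (R ⧸ J ^ t) :=
    ModuleCat.ofHom (Submodule.mapQ _ _ LinearMap.id (Ideal.pow_le_pow_right hs))
  have hcomm := ProjectiveResolution.lift_commutes_zero pr P Q
  set φ := ProjectiveResolution.lift pr P Q
  obtain ⟨h, hh⟩ : ∃ h : P.complex.X 0 ⟶ ModuleCat.of R N,
    φ.f 1 ≫ ModuleCat.ofHom g = P.complex.d 1 0 ≫ h := by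
    have := hc pr P φ hcomm hs0
    rwa [show (ComplexShape.up ℕ).prev 1 = 0 from CochainComplex.prev_nat_succ 0] at this
  obtain ⟨ε', α', β', hε', hα', hβ', hex'⟩ := exists_lifts (J ^ s) P
  -- `γ` is multiplication by `γ 1`, which is `1` modulo `J ^ t`, so that `f` need only be computed
  -- on multiples `γ 1 • r`.
  let γ : R →ₗ[R] R := α ∘ₗ (φ.f 0).hom ∘ₗ β'
  have hγ : ∀ r, γ r = r * γ 1 := fun r ↦ by
    conv_lhs => rw [← mul_one r, ← smul_eq_mul, map_smul, smul_eq_mul]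
  have hγ1 : 1 - γ 1 ∈ J ^ t := by
    rw [← Ideal.Quotient.eq_zero_iff_mem, map_sub, sub_eq_zero]
    have h1 : ε (φ.f 0 (β' 1)) = pr.hom (ε' (β' 1)) := by
      rw [hε, hε']
      exact congr($(hcomm).hom (β' 1))
    change _ = Ideal.Quotient.mk _ (α (φ.f 0 (β' 1)))
    rw [hα, h1, hβ']
    rfl
  refine ⟨s, hs, h.hom (β' 1) + f ⟨1 - γ 1, hγ1⟩, fun r hr ↦ ?_⟩
  have hrt := Ideal.pow_le_pow_right hs hr
  have e1 : (⟨r, hrt⟩ : ↥(J ^ t)) = γ 1 • ⟨r, hrt⟩ + r • ⟨1 - γ 1, hγ1⟩ := by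
    ext
    change r = γ 1 * r + r * (1 - γ 1)
    ring
  obtain ⟨p, hp⟩ := (hex' (β' r)).1 (by rw [hβ']; exact Ideal.Quotient.eq_zero_iff_mem.2 hr)
  have e2 : f (γ 1 • ⟨r, hrt⟩) = r • h.hom (β' 1) := by
    have h3 : g (φ.f 1 p) = h.hom (P.complex.d 1 0 p) := congr($(hh).hom p)
    have h4 : Q.complex.d 1 0 (φ.f 1 p) = φ.f 0 (P.complex.d 1 0 p) := congr($(φ.comm 1 0).hom p)
    rw [hp] at h3
    rw [← map_smul, ← map_smul, smul_eq_mul, mul_one, ← h3]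
    change _ = f ⟨α (Q.complex.d 1 0 (φ.f 1 p)), _⟩
    congr 1
    ext
    change γ 1 * r = α (Q.complex.d 1 0 (φ.f 1 p))
    rw [h4, hp, mul_comm, ← hγ]
    rfl
  conv_lhs => rw [e1, map_add, e2, map_smul, ← smul_add]

theorem subsingleton_localCohomology_zero (J : Ideal R) (N : Type u) [AddCommGroup N] [Module R N]
    (H : ∀ (t : ℕ) (x : N), (∀ r ∈ J ^ t, r • x = 0) → x = 0) :
    Subsingleton ((localCohomology J 0).obj (ModuleCat.of R N)) := by
  refine subsingleton_localCohomology J 0 _ fun t ↦ ?_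
  let P := projectiveResolution (ModuleCat.of R (R ⧸ J ^ t))
  obtain ⟨ε, α, β, -, hα, hβ, hex⟩ := exists_lifts (J ^ t) P
  refine subsingleton_ext P 0 _ fun g hg ↦ ⟨0, ?_⟩
  rw [comp_zero]
  ext p
  refine H t _ fun r hr ↦ ?_
  rw [← map_smul]
  obtain ⟨q, hq⟩ := (hex (r • p)).1 (by
    rw [map_smul, ← hα, ← Ideal.Quotient.mk_eq_mk, ← Submodule.Quotient.mk_smul]
    exact Ideal.Quotient.eq_zero_iff_mem.2 (Ideal.mul_mem_right _ _ hr))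
  rw [← hq]
  exact congr($(hg).hom q)

theorem eq_zero_of_subsingleton (J : Ideal R) (N : Type u) [AddCommGroup N] [Module R N]
    (H : Subsingleton ((localCohomology J 0).obj (ModuleCat.of R N)))
    (x : N) (hx : ∀ r ∈ J, r • x = 0) : x = 0 := by
  replace hx : ∀ r ∈ J ^ 1, r • x = 0 := by rwa [pow_one]
  let Q := projectiveResolution (ModuleCat.of R (R ⧸ J ^ 1))
  obtain ⟨ε, α, β, hε, hα, hβ, hex⟩ := exists_lifts (J ^ 1) Q
  let g : Q.complex.X 0 →ₗ[R] N := α.smulRight x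
  have hg : Q.complex.d 1 0 ≫ ModuleCat.ofHom g = 0 := by
    ext q
    refine hx _ ?_
    rw [← Ideal.Quotient.eq_zero_iff_mem, hα]
    exact (hex _).2 ⟨q, rfl⟩
  obtain ⟨c, hc⟩ := exists_class Q 0 (ModuleCat.of R N) (ModuleCat.ofHom g) hg
  obtain ⟨s, hs, hs0⟩ := exists_map_eq_zero J 0 (ModuleCat.of R N) H 1 c
  let P := projectiveResolution (ModuleCat.of R (R ⧸ J ^ s))
  let pr : ModuleCat.of R (R ⧸ J ^ s) ⟶ ModuleCat.of R (R ⧸ J ^ 1) :=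
    ModuleCat.ofHom (Submodule.mapQ _ _ LinearMap.id (Ideal.pow_le_pow_right hs))
  have hcomm := ProjectiveResolution.lift_commutes_zero pr P Q
  set φ := ProjectiveResolution.lift pr P Q
  obtain ⟨h, hh⟩ := hc pr P φ hcomm hs0
  have hh0 : φ.f 0 ≫ ModuleCat.ofHom g = 0 := by
    rw [hh, P.complex.shape, zero_comp]
    simp
  -- Evaluating the trivial pulled-back cocycle at a lift of `1` shows that an element congruent to
  -- `1` modulo `J` kills `x`.
  obtain ⟨ε', α', β', hε', hα', hβ', hex'⟩ := exists_lifts (J ^ s) P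
  have hγ1 : 1 - α (φ.f 0 (β' 1)) ∈ J ^ 1 := by
    rw [← Ideal.Quotient.eq_zero_iff_mem, map_sub, sub_eq_zero]
    have h1 : ε (φ.f 0 (β' 1)) = pr.hom (ε' (β' 1)) := by
      rw [hε, hε']
      exact congr($(hcomm).hom (β' 1))
    rw [hα, h1, hβ']
    rfl
  have h5 : α (φ.f 0 (β' 1)) • x = 0 := congr($(hh0).hom (β' 1))
  have := hx _ hγ1
  rwa [sub_smul, h5, sub_zero, one_smul] at this

end Homological

/-! ### Reflexive modules satisfy (S2) -/

section Reflexive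

open IsLocalRing

lemma height_ne_zero_iff_ne_bot {A : Type*} [CommRing A] [IsDomain A] {I : Ideal A} :
    I.height ≠ 0 ↔ I ≠ ⊥ := not_congr Ideal.height_eq_zero_iff_eq_bot

/-- In a normal Noetherian local domain of dimension at least two, a fraction that multiplies the
maximal ideal into the ring lies in the ring. -/
lemma exists_algebraMap_eq_of_mul_mem {A : Type*} [CommRing A] [IsDomain A] [IsLocalRing A]
    [IsNoetherianRing A] [IsIntegrallyClosed A] (hm : 2 ≤ (maximalIdeal A).height)
    (q : FractionRing A)
    (hq : ∀ a ∈ maximalIdeal A, ∃ b : A, algebraMap A (FractionRing A) b = q * algebraMap _ _ a) :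
    ∃ b : A, algebraMap A (FractionRing A) b = q := by
  have hinj := IsFractionRing.injective A (FractionRing A)
  by_cases h : ∀ a ∈ maximalIdeal A, ∀ b : A,
      algebraMap A (FractionRing A) b = q * algebraMap _ _ a → b ∈ maximalIdeal A
  · rw [← IsIntegrallyClosed.isIntegral_iff]
    refine isIntegral_of_smul_mem_submodule (M := FractionRing A)
      (Submodule.map (Algebra.linearMap A (FractionRing A)) (maximalIdeal A)) ?_ ?_ q ?_
    · intro h0
      replace h0 : maximalIdeal A = ⊥ :=
        Submodule.map_injective_of_injective hinj (h0.trans (Submodule.map_bot _).symm)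
      simp [h0] at hm
    · exact (IsNoetherian.noetherian (maximalIdeal A)).map _
    · rintro _ ⟨a, ha, rfl⟩
      obtain ⟨b, hb⟩ := hq a ha
      exact ⟨b, h a ha b hb, by simpa using hb⟩
  · -- Some `q a` with `a ∈ m` is a unit, and then `a` generates `m`.
    push Not at h
    obtain ⟨a, ha, b, hb, hbm⟩ := h
    rw [mem_maximalIdeal, mem_nonunits_iff, not_not] at hbm
    have hspan : maximalIdeal A = Ideal.span {a} := by
      refine le_antisymm (fun c hc => ?_) ((Ideal.span_singleton_le_iff_mem _).2 ha)
      obtain ⟨b', hb'⟩ := hq c hc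
      have : b' * a = b * c := hinj (by rw [map_mul, map_mul, hb, hb']; ring)
      rw [Ideal.mem_span_singleton]
      exact (hbm.dvd_mul_left).1 (this ▸ dvd_mul_left a b')
    have : (maximalIdeal A).IsPrincipal := ⟨a, hspan⟩
    have := Ideal.height_le_one_of_isPrincipal_of_mem_minimalPrimes (maximalIdeal A)
      (maximalIdeal A) (by simp [Ideal.minimalPrimes_eq_subsingleton_self])
    exact absurd (hm.trans this) (by norm_num)

/-- Linear maps from a power of the maximal ideal to the ring are multiplications: such a map is
multiplication by a fraction `q` with `q m^t ⊆ A`, and the exponent `t` can be lowered step by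
step. -/
lemma exists_eq_mul {A : Type*} [CommRing A] [IsDomain A] [IsLocalRing A]
    [IsNoetherianRing A] [IsIntegrallyClosed A] (hm : 2 ≤ (maximalIdeal A).height)
    (t : ℕ) (f : ↥(maximalIdeal A ^ t) →ₗ[A] A) : ∃ y : A, ∀ r, f r = r * y := by
  have hinj := IsFractionRing.injective A (FractionRing A)
  have hne : maximalIdeal A ^ t ≠ ⊥ := by
    apply pow_ne_zero
    rintro h
    simp [h] at hm
  obtain ⟨r₀, hr₀, hr₀0⟩ := Submodule.exists_mem_ne_zero_of_ne_bot hne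
  have key (r) : f r * r₀ = r * f ⟨r₀, hr₀⟩ := by
    rw [mul_comm, ← smul_eq_mul, ← smul_eq_mul, ← map_smul, ← map_smul]
    congr 1
    ext
    simp [mul_comm]
  have hr₀' : algebraMap A (FractionRing A) r₀ ≠ 0 := by simpa using hr₀0
  set q : FractionRing A := algebraMap _ _ (f ⟨r₀, hr₀⟩) / algebraMap _ _ r₀ with hqdef
  have hq (r) : algebraMap A (FractionRing A) (f r) = q * algebraMap _ _ (r : A) := by
    rw [hqdef, div_mul_eq_mul_div, eq_div_iff hr₀', ← map_mul, key, mul_comm, map_mul]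
  have main (s : ℕ) : (∀ r ∈ maximalIdeal A ^ s,
      ∃ b : A, algebraMap A (FractionRing A) b = q * algebraMap _ _ r) →
      ∃ b : A, algebraMap A (FractionRing A) b = q := by
    induction s with
    | zero => intro h; simpa using h 1 (by simp)
    | succ s ih =>
      intro h
      refine ih fun r hr => exists_algebraMap_eq_of_mul_mem hm _ fun a ha => ?_
      obtain ⟨b, hb⟩ := h (r * a) (by rw [pow_succ]; exact Ideal.mul_mem_mul hr ha)
      exact ⟨b, by rw [hb, map_mul, mul_assoc]⟩
  obtain ⟨y, hy⟩ := main t fun r hr => ⟨f ⟨r, hr⟩, hq ⟨r, hr⟩⟩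
  exact ⟨y, fun r => hinj (by rw [hq, map_mul, hy, mul_comm])⟩

section Loc

variable {R M : Type u} [CommRing R] [AddCommGroup M] [Module R M] (p : Ideal R) [p.IsPrime]

lemma le_height_maximalIdeal {n : ℕ∞} (h : n ≤ p.height) :
    n ≤ (maximalIdeal (Localization.AtPrime p)).height := by
  have h1 := IsLocalization.AtPrime.ringKrullDim_eq_height p (Localization.AtPrime p)
  rw [← IsLocalRing.maximalIdeal_height_eq_ringKrullDim, WithBot.coe_inj] at h1
  rwa [h1]

lemma eq_zero_of_mk_eq_zero [IsDomain R] [Module.IsTorsionFree R M] {x : M} {s : p.primeCompl}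
    (h : LocalizedModule.mk x s = 0) : x = 0 := by
  rw [← LocalizedModule.zero_mk 1, LocalizedModule.mk_eq] at h
  obtain ⟨u, hu⟩ := h
  have hu0 : (u : R) ≠ 0 := fun h0 => u.2 (h0 ▸ p.zero_mem)
  have : (u : R) • x = 0 := by simpa [Submonoid.smul_def] using hu
  exact (smul_eq_zero.1 this).resolve_left hu0

/-- The linear functional on `M_p` obtained by localizing a linear functional on `M`. -/
noncomputable def locDual (l : Module.Dual R M) :
    LocalizedModule p.primeCompl M →ₗ[Localization.AtPrime p] Localization.AtPrime p :=
  IsLocalizedModule.mapExtendScalars p.primeCompl (LocalizedModule.mkLinearMap p.primeCompl M)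
    (Algebra.linearMap R (Localization.AtPrime p)) (Localization.AtPrime p) l

lemma locDual_mk_one (l : Module.Dual R M) (x : M) :
    locDual p l (LocalizedModule.mk x 1) = algebraMap R _ (l x) :=
  IsLocalizedModule.map_apply p.primeCompl (LocalizedModule.mkLinearMap p.primeCompl M)
    (Algebra.linearMap R (Localization.AtPrime p)) l x

lemma algebraMap_smul_mk (x : M) (s : p.primeCompl) :
    algebraMap R (Localization.AtPrime p) s • LocalizedModule.mk x s = LocalizedModule.mk x 1 := by
  rw [algebraMap_smul, LocalizedModule.smul'_mk]
  exact LocalizedModule.mk_cancel s x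

/-- If `M` embeds in its bidual, the localized functionals separate the points of `M_p`. -/
lemma eq_zero_of_locDual_eq_zero [IsDomain R] (hinj : Function.Injective (Module.Dual.eval R M))
    (z : LocalizedModule p.primeCompl M) (hz : ∀ l, locDual p l z = 0) : z = 0 := by
  induction z using LocalizedModule.induction_on with
  | h x s =>
    have : x = 0 := by
      apply hinj
      rw [map_zero]
      ext l
      have h1 := locDual_mk_one p l x
      rw [← algebraMap_smul_mk p x s, map_smul, hz, smul_zero] at h1
      have := IsLocalization.injective (Localization.AtPrime p) p.primeCompl_le_nonZeroDivisors
      simpa using (this (h1.symm.trans (map_zero _).symm))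
    rw [this, LocalizedModule.zero_mk]

lemma subsingleton_one_of_bijective [IsDomain R] [IsNoetherianRing R]
    [IsIntegrallyClosed R] [Module.Finite R M]
    (hbij : Function.Bijective (Module.Dual.eval R M)) (hp : 2 ≤ p.height) :
    Subsingleton ((localCohomology (maximalIdeal (Localization.AtPrime p)) 1).obj
      (ModuleCat.of (Localization.AtPrime p) (LocalizedModule p.primeCompl M))) := by
  have := isIntegrallyClosed_of_isLocalization (Localization.AtPrime p) p.primeCompl
    p.primeCompl_le_nonZeroDivisors
  have hm := le_height_maximalIdeal p hp
  refine subsingleton_localCohomology_one _ _ fun t f => ?_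
  have hne : maximalIdeal (Localization.AtPrime p) ^ t ≠ ⊥ := by
    apply pow_ne_zero
    rintro h
    simp [h] at hm
  obtain ⟨r₀, hr₀, hr₀0⟩ := Submodule.exists_mem_ne_zero_of_ne_bot hne
  choose y hy using fun l : Module.Dual R M => exists_eq_mul hm t (locDual p l ∘ₗ f)
  have huniq (l : Module.Dual R M) (a : Localization.AtPrime p)
      (h : locDual p l (f ⟨r₀, hr₀⟩) = r₀ * a) : y l = a :=
    mul_left_cancel₀ hr₀0 ((hy l ⟨r₀, hr₀⟩).symm.trans h)
  -- The multipliers `y l` depend linearly on `l`, being determined by the value at `r₀ ≠ 0`.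
  let Y : Module.Dual R M →ₗ[R] Localization.AtPrime p :=
    { toFun := y
      map_add' l l' := by
        apply huniq
        have h1 := hy l ⟨r₀, hr₀⟩
        have h2 := hy l' ⟨r₀, hr₀⟩
        simp only [LinearMap.comp_apply] at h1 h2
        rw [mul_add, ← h1, ← h2]
        simp [locDual]
      map_smul' c l := by
        apply huniq
        have h1 := hy l ⟨r₀, hr₀⟩
        simp only [LinearMap.comp_apply] at h1
        rw [RingHom.id_apply, mul_smul_comm, ← h1]
        simp [locDual] }
  have := Module.finitePresentation_of_finite R (Module.Dual R M)
  obtain ⟨h, s, hs⟩ := Module.FinitePresentation.exists_lift_of_isLocalizedModule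
    p.primeCompl (Algebra.linearMap R (Localization.AtPrime p)) Y
  obtain ⟨x, hx⟩ := hbij.2 h
  refine ⟨LocalizedModule.mk x s, fun r => ?_⟩
  rw [← sub_eq_zero]
  refine eq_zero_of_locDual_eq_zero p hbij.1 _ fun l => ?_
  have h1 := hy l r
  simp only [LinearMap.comp_apply] at h1
  rw [map_sub, map_smul, h1, smul_eq_mul, ← mul_sub]
  have h2 := locDual_mk_one p l x
  rw [← algebraMap_smul_mk p x s, map_smul] at h2
  have h3 := LinearMap.congr_fun hs l
  rw [← hx] at h3
  have h4 : algebraMap R (Localization.AtPrime p) (l x) = algebraMap R _ (s : R) * y l := by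
    simpa [Submonoid.smul_def, Algebra.smul_def, Y] using h3
  rw [h4, smul_eq_mul] at h2
  have hs0 : algebraMap R (Localization.AtPrime p) (s : R) ≠ 0 :=
    (IsLocalization.map_units _ s).ne_zero
  rw [mul_left_cancel₀ hs0 h2, sub_self, mul_zero]

lemma subsingleton_zero_of_isTorsionFree [IsDomain R] [Module.IsTorsionFree R M] (hp : p.height ≠ 0) :
    Subsingleton ((localCohomology (maximalIdeal (Localization.AtPrime p)) 0).obj
      (ModuleCat.of (Localization.AtPrime p) (LocalizedModule p.primeCompl M))) := by
  have hm := le_height_maximalIdeal p (Order.one_le_iff_pos.2 (pos_iff_ne_zero.2 hp))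
  refine subsingleton_localCohomology_zero _ _ fun t x hx => ?_
  have hne : maximalIdeal (Localization.AtPrime p) ^ t ≠ ⊥ := by
    apply pow_ne_zero
    rintro h
    simp [h] at hm
  obtain ⟨r₀, hr₀, hr₀0⟩ := Submodule.exists_mem_ne_zero_of_ne_bot hne
  exact (smul_eq_zero.1 (hx r₀ hr₀)).resolve_left hr₀0

end Loc

end Reflexive

/-! ### Modules satisfying (S2) are reflexive -/

section Converse

open IsLocalRing

variable {R M : Type u} [CommRing R] [IsDomain R] [AddCommGroup M]
  [Module R M]

/-- A torsion element would give a nonzero associated prime `p`, hence a nonzero element of `M_p`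
killed by the maximal ideal of `R_p`. -/
lemma isTorsionFree_of_subsingleton [IsNoetherianRing R]
    (H : ∀ (p : Ideal R) [p.IsPrime], p.height ≠ 0 →
      Subsingleton ((localCohomology (maximalIdeal (Localization.AtPrime p)) 0).obj
        (ModuleCat.of (Localization.AtPrime p) (LocalizedModule p.primeCompl M)))) :
    Module.IsTorsionFree R M := by
  rw [Module.isTorsionFree_iff_smul_eq_zero]
  intro r x hrx
  by_contra! hne
  obtain ⟨hr, hx⟩ := hne
  obtain ⟨p, hp, hle⟩ := exists_le_isAssociatedPrime_of_isNoetherianRing R x hx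
  obtain ⟨hpp, y, hy⟩ := isAssociatedPrime_iff.1 hp
  have hmem (a : R) : a ∈ p ↔ a • y = 0 := by
    rw [hy, Submodule.mem_colon_singleton, Submodule.mem_bot]
  have hrp : r ∈ p := hle (by rwa [Submodule.mem_colon_singleton, Submodule.mem_bot])
  have hp0 : p.height ≠ 0 := by
    rw [height_ne_zero_iff_ne_bot]
    rintro rfl
    exact hr (by simpa using hrp)
  have h0 := @eq_zero_of_subsingleton _ _ _ _ _ _ (H p hp0) (LocalizedModule.mk y 1) (by
    intro a ha
    obtain ⟨b, s, rfl⟩ := IsLocalization.exists_mk'_eq p.primeCompl a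
    rw [IsLocalization.AtPrime.mk'_mem_maximal_iff _ p] at ha
    rw [← Localization.mk_eq_mk', LocalizedModule.mk_smul_mk, (hmem b).1 ha,
      LocalizedModule.zero_mk])
  rw [← LocalizedModule.zero_mk 1, LocalizedModule.mk_eq] at h0
  obtain ⟨u, hu⟩ := h0
  exact u.2 ((hmem u).2 (by simpa [Submonoid.smul_def] using hu))

/-- A finite torsion-free module over a domain embeds in its bidual: a functional on `M ⊗ Frac R` not
vanishing at a given nonzero `x` restricts, after clearing denominators, to one on `M`. -/
lemma eval_injective [IsNoetherianRing R] [Module.Finite R M] [Module.IsTorsionFree R M] :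
    Function.Injective (Module.Dual.eval R M) := by
  rw [injective_iff_map_eq_zero]
  intro x hx
  by_contra hx0
  let S := nonZeroDivisors R
  have hx1 : LocalizedModule.mkLinearMap S M x ≠ 0 := by
    intro h
    rw [IsLocalizedModule.eq_zero_iff S] at h
    obtain ⟨c, hc⟩ := h
    exact hx0 ((smul_eq_zero.1 hc).resolve_left (nonZeroDivisors.coe_ne_zero c))
  obtain ⟨g, hg⟩ := not_forall.1
    (mt (Module.forall_dual_apply_eq_zero_iff (FractionRing R) _).1 hx1)
  have := Module.finitePresentation_of_finite R M
  obtain ⟨h, s, hs⟩ := Module.FinitePresentation.exists_lift_of_isLocalizedModule S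
    (Algebra.linearMap R (FractionRing R)) (g.restrictScalars R ∘ₗ LocalizedModule.mkLinearMap S M)
  have h1 := LinearMap.congr_fun hs x
  have h2 : h x = 0 := by simpa using LinearMap.congr_fun hx h
  simp only [LinearMap.comp_apply, h2, map_zero, LinearMap.smul_apply] at h1
  exact (smul_ne_zero (nonZeroDivisors.coe_ne_zero s) hg) h1.symm

lemma isPrincipalIdealRing_of_height_le_one [IsNoetherianRing R] [IsIntegrallyClosed R] (p : Ideal R) [p.IsPrime]
    (hp : p.height ≤ 1) : IsPrincipalIdealRing (Localization.AtPrime p) := by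
  have := isIntegrallyClosed_of_isLocalization (Localization.AtPrime p) p.primeCompl
    p.primeCompl_le_nonZeroDivisors
  have htfae : IsPrincipalIdealRing (Localization.AtPrime p) ↔
      IsIntegrallyClosed (Localization.AtPrime p) ∧ ∀ P : Ideal (Localization.AtPrime p),
        P ≠ ⊥ → P.IsPrime → P = maximalIdeal (Localization.AtPrime p) :=
    (tfae_of_isNoetherianRing_of_isLocalRing_of_isDomain (Localization.AtPrime p)).out 0 3
  refine htfae.2 ⟨inferInstance, fun P hP hPp => ?_⟩
  by_contra hne
  have hlt : P < maximalIdeal (Localization.AtPrime p) :=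
    lt_of_le_of_ne (le_maximalIdeal hPp.ne_top) hne
  have h1 := Ideal.height_add_one_le_of_lt_of_isPrime hlt
  have h2 := IsLocalization.AtPrime.ringKrullDim_eq_height p (Localization.AtPrime p)
  rw [← IsLocalRing.maximalIdeal_height_eq_ringKrullDim, WithBot.coe_inj] at h2
  rw [h2] at h1
  have h3 : P.height + 1 ≤ 0 + 1 := by simpa using h1.trans hp
  have h4 : P.height ≤ 0 := (ENat.add_le_add_iff_right (by simp)).1 h3
  exact hP (Ideal.height_eq_zero_iff_eq_bot.1 (le_antisymm h4 bot_le))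

/-- Evaluation is surjective locally at a prime `p` of height at most one, because `M_p` is free: a
basis of `M_p` and its coordinates give, after clearing denominators, `m_i ∈ M`, `h_i ∈ M*` and
`u ∉ p` with `u x = ∑ h_i(x) m_i` on `M`, hence `u φ = ev (∑ φ(h_i) m_i)`. -/
lemma exists_smul_mem_range_of_height_le_one [IsNoetherianRing R] [IsIntegrallyClosed R] [Module.Finite R M]
    [Module.IsTorsionFree R M] (p : Ideal R) [p.IsPrime] (hp : p.height ≤ 1)
    (φ : Module.Dual R (Module.Dual R M)) :
    ∃ u ∈ p.primeCompl, u • φ ∈ LinearMap.range (Module.Dual.eval R M) := by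
  classical
  have := isPrincipalIdealRing_of_height_le_one p hp
  let b := Module.Free.chooseBasis (Localization.AtPrime p) (LocalizedModule p.primeCompl M)
  have := Module.finitePresentation_of_finite R M
  choose h s hs using fun i => Module.FinitePresentation.exists_lift_of_isLocalizedModule
    p.primeCompl (Algebra.linearMap R (Localization.AtPrime p))
    ((b.coord i).restrictScalars R ∘ₗ LocalizedModule.mkLinearMap p.primeCompl M)
  choose mt hmt using fun i => IsLocalizedModule.mk'_surjective p.primeCompl
    (LocalizedModule.mkLinearMap p.primeCompl M) (b i)
  -- `u` is the product of all denominators, and `w i` that of those with index other than `i`.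
  let w (i) : R := ∏ j ∈ Finset.univ.erase i, ((s j * (mt j).2 : p.primeCompl) : R)
  let u : R := ∏ j, ((s j * (mt j).2 : p.primeCompl) : R)
  have hu (i) : u = w i * (s i * (mt i).2) := by
    rw [mul_comm]
    exact (Finset.mul_prod_erase Finset.univ
      (fun j => ((s j * (mt j).2 : p.primeCompl) : R)) (Finset.mem_univ i)).symm
  have key (x : M) : u • x = ∑ i, h i x • w i • (mt i).1 := by
    rw [← sub_eq_zero]
    refine eq_zero_of_mk_eq_zero p (s := 1) ?_
    change LocalizedModule.mkLinearMap p.primeCompl M _ = 0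
    rw [map_sub, sub_eq_zero, map_smul, map_sum]
    conv_lhs => rw [← b.sum_repr (LocalizedModule.mkLinearMap p.primeCompl M x), Finset.smul_sum]
    refine Finset.sum_congr rfl fun i _ => ?_
    have h1 := LinearMap.congr_fun (hs i) x
    have h2 : ((mt i).2 : R) • b i = LocalizedModule.mkLinearMap p.primeCompl M (mt i).1 := by
      rw [← hmt i]
      exact IsLocalizedModule.mk'_cancel' (LocalizedModule.mkLinearMap p.primeCompl M)
        (mt i).1 (mt i).2
    have h3 : algebraMap R (Localization.AtPrime p) (h i x) = algebraMap R _ (s i : R) *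
        b.repr (LocalizedModule.mkLinearMap p.primeCompl M x) i := by
      rw [LinearMap.smul_apply, Submonoid.smul_def, Algebra.smul_def] at h1
      exact h1
    rw [map_smul, map_smul, ← h2, hu i]
    rw [← algebraMap_smul (Localization.AtPrime p) (w i * _),
      ← algebraMap_smul (Localization.AtPrime p) (h i x),
      ← algebraMap_smul (Localization.AtPrime p) (w i),
      ← algebraMap_smul (Localization.AtPrime p) ((mt i).2 : R), h3]
    simp only [smul_smul, map_mul]
    congr 1
    ring
  refine ⟨u, prod_mem fun j _ => (s j * (mt j).2).2, ∑ i, φ (h i) • w i • (mt i).1, ?_⟩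
  have hl (l : Module.Dual R M) : u • l = ∑ i, l (w i • (mt i).1) • h i := by
    ext x
    rw [LinearMap.smul_apply, ← map_smul, key, map_sum, LinearMap.sum_apply]
    refine Finset.sum_congr rfl fun i _ => ?_
    rw [map_smul, LinearMap.smul_apply, smul_eq_mul, smul_eq_mul, mul_comm]
  ext l
  rw [LinearMap.smul_apply, ← map_smul, hl, map_sum, map_sum, LinearMap.sum_apply]
  refine Finset.sum_congr rfl fun i _ => ?_
  rw [map_smul (Module.Dual.eval R M), map_smul φ, LinearMap.smul_apply, Module.Dual.eval_apply,
    smul_eq_mul, smul_eq_mul, mul_comm]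

/-- If `H^1` of `M_p` vanishes and `p φ` comes from `M`, then `φ` comes from `M` locally at `p`:
`a ↦ a φ` is a linear map from the maximal ideal to `M_p`, which on a power of the maximal ideal is
multiplication by some `x`, and then `φ = ev x` in the torsion-free module `(M**)_p`. -/
lemma exists_smul_mem_range_of_subsingleton [Module.Finite R M]
    (hinj : Function.Injective (Module.Dual.eval R M)) (p : Ideal R) [p.IsPrime] (hp0 : p ≠ ⊥)
    (H : Subsingleton ((localCohomology (maximalIdeal (Localization.AtPrime p)) 1).obj
        (ModuleCat.of (Localization.AtPrime p) (LocalizedModule p.primeCompl M))))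
    (φ : Module.Dual R (Module.Dual R M))
    (hφ : ∀ r ∈ p, r • φ ∈ LinearMap.range (Module.Dual.eval R M)) :
    ∃ u ∈ p.primeCompl, u • φ ∈ LinearMap.range (Module.Dual.eval R M) := by
  let e := LocalizedModule.map p.primeCompl (Module.Dual.eval R M)
  have he : Function.Injective e := LocalizedModule.map_injective _ _ hinj
  let Φ : LocalizedModule p.primeCompl (Module.Dual R (Module.Dual R M)) := LocalizedModule.mk φ 1
  have hΦ (a : ↥(maximalIdeal (Localization.AtPrime p) ^ 1)) :
      (a : Localization.AtPrime p) • Φ ∈ LinearMap.range e := by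
    obtain ⟨a, ha⟩ := a
    rw [pow_one] at ha
    obtain ⟨r, s, rfl⟩ := IsLocalization.exists_mk'_eq p.primeCompl a
    rw [IsLocalization.AtPrime.mk'_mem_maximal_iff _ p] at ha
    obtain ⟨x, hx⟩ := hφ r ha
    refine ⟨LocalizedModule.mk x s, ?_⟩
    simp only [← Localization.mk_eq_mk', Φ, LocalizedModule.mk_smul_mk, e,
      LocalizedModule.map_mk, hx, mul_one]
  let f : ↥(maximalIdeal (Localization.AtPrime p) ^ 1) →ₗ[Localization.AtPrime p]
      LocalizedModule p.primeCompl M :=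
    (LinearEquiv.ofInjective e he).symm.toLinearMap ∘ₗ
      ((LinearMap.toSpanSingleton _ _ Φ ∘ₗ Submodule.subtype _).codRestrict (LinearMap.range e) hΦ)
  have hf (a) : e (f a) = (a : Localization.AtPrime p) • Φ :=
    congr_arg Subtype.val ((LinearEquiv.ofInjective e he).apply_symm_apply ⟨_, hΦ a⟩)
  obtain ⟨s, hs, x, hx⟩ := exists_eq_smul_of_subsingleton _ _ H 1 f
  have hne : maximalIdeal (Localization.AtPrime p) ^ s ≠ ⊥ := by
    apply pow_ne_zero
    have := le_height_maximalIdeal p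
      (Order.one_le_iff_pos.2 (pos_iff_ne_zero.2 (height_ne_zero_iff_ne_bot.2 hp0)))
    rintro h
    simp [h] at this
  obtain ⟨r₀, hr₀, hr₀0⟩ := Submodule.exists_mem_ne_zero_of_ne_bot hne
  have hex : e x = Φ := by
    have h1 := congr_arg e (hx r₀ hr₀)
    rw [hf, map_smul] at h1
    exact (smul_right_injective _ hr₀0 h1).symm
  induction x using LocalizedModule.induction_on with
  | h m v =>
    simp only [e, Φ, LocalizedModule.map_mk] at hex
    rw [LocalizedModule.mk_eq] at hex
    obtain ⟨c, hc⟩ := hex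
    refine ⟨c * v, (c * v).2, (c : R) • m, ?_⟩
    rw [map_smul, mul_smul]
    simpa [Submonoid.smul_def] using hc

end Converse

/-- Let `R` be a Noetherian integrally closed integral domain (a normal
Noetherian domain) and `M` a finitely generated `R`-module. Then the following are
equivalent: (a) `M` satisfies Serre's condition `(S2)`: for every prime ideal `p` of `R`
and every natural number `i < min(2, height p)`, the `i`-th local cohomology of `M_p`
over `R_p` with respect to the maximal ideal of `R_p` vanishes; (b) the evaluation map
`ev_M : M → Hom_R(Hom_R(M,R),R)` is bijective. -/
theorem s2_iff_eval_bijective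
    (R M : Type u) [CommRing R] [IsDomain R] [IsNoetherianRing R] [IsIntegrallyClosed R]
    [AddCommGroup M] [Module R M] [Module.Finite R M] :
    (∀ (p : Ideal R) [hp : p.IsPrime] (i : ℕ),
        (i : ℕ∞) < min 2 (Order.height (⟨p, hp⟩ : PrimeSpectrum R)) →
        Subsingleton ((localCohomology
            (IsLocalRing.maximalIdeal (Localization.AtPrime p)) i).obj
          (ModuleCat.of (Localization.AtPrime p) (LocalizedModule p.primeCompl M)))) ↔
      Function.Bijective (Module.Dual.eval R M) := by
  constructor
  · intro H
    have H' (p : Ideal R) [hp : p.IsPrime] (i : ℕ) (h : (i : ℕ∞) < min 2 p.height) :=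
      H p i (by rwa [PrimeSpectrum.height_eq_orderHeight ⟨p, hp⟩] at h)
    have htf : Module.IsTorsionFree R M := isTorsionFree_of_subsingleton fun p _ hp =>
      H' p 0 (by simpa [pos_iff_ne_zero] using hp)
    have hinj := eval_injective (R := R) (M := M)
    refine ⟨hinj, ?_⟩
    by_contra hsurj
    rw [← LinearMap.range_eq_top, ← ne_eq, ← lt_top_iff_ne_top] at hsurj
    obtain ⟨ψ, -, hψ⟩ := SetLike.exists_of_lt hsurj
    -- An associated prime `p` of the cokernel, as the annihilator of the class of some `φ`.
    obtain ⟨p, hp, -⟩ := exists_le_isAssociatedPrime_of_isNoetherianRing R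
      (Submodule.Quotient.mk (p := LinearMap.range (Module.Dual.eval R M)) ψ)
      (by rwa [ne_eq, Submodule.Quotient.mk_eq_zero])
    obtain ⟨hpp, y, hy⟩ := isAssociatedPrime_iff.1 hp
    obtain ⟨φ, rfl⟩ := Submodule.Quotient.mk_surjective _ y
    have hmem (a : R) : a ∈ p ↔ a • φ ∈ LinearMap.range (Module.Dual.eval R M) := by
      rw [hy, Submodule.mem_colon_singleton, Submodule.mem_bot, ← Submodule.Quotient.mk_smul,
        Submodule.Quotient.mk_eq_zero]
    obtain ⟨u, hu, hu'⟩ : ∃ u ∈ p.primeCompl,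
        u • φ ∈ LinearMap.range (Module.Dual.eval R M) := by
      by_cases h1 : p.height ≤ 1
      · exact exists_smul_mem_range_of_height_le_one p h1 φ
      · refine exists_smul_mem_range_of_subsingleton hinj p ?_ (H' p 1 ?_) φ
          fun r hr => (hmem r).1 hr
        · rintro rfl
          simp at h1
        · exact lt_min (by norm_num) (by simpa using h1)
    exact hu ((hmem u).2 hu')
  · intro hbij p hp i hi
    rw [← PrimeSpectrum.height_eq_orderHeight ⟨p, hp⟩] at hi
    have hi2 : i < 2 := by exact_mod_cast hi.trans_le (min_le_left _ _)
    have hip : (i : ℕ∞) < p.height := hi.trans_le (min_le_right _ _)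
    have htf : Module.IsTorsionFree R M :=
      Function.Injective.moduleIsTorsionFree _ hbij.1 (map_smul _)
    interval_cases i
    · exact subsingleton_zero_of_isTorsionFree p (pos_iff_ne_zero.1 (by simpa using hip))
    · exact subsingleton_one_of_bijective p hbij
        (by simpa [one_add_one_eq_two] using Order.add_one_le_of_lt hip)
end

section
/- Let R be a Noetherian integrally closed integral domain, and let M and N be finitely generated R-modules whose evaluation maps ev_M : M → M** and ev_N : N → N** are bijective (i.e., M and N are reflexive). If φ : M → N is an R-linear map such that the localized map φ_p : M_p → N_p is bijective for every prime ideal p of R of height at most 1, then φ is bijective. -/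
/-!
The heart of the matter is the algebraic Hartogs property of a Noetherian integrally closed domain,
`R = ⋂ R_p` inside the fraction field, over the primes `p` of height at most one. It is
stated without fractions as `dvd_of_locally_dvd`: if `b` lies in `a R_p` for all such `p`, then
`b ∈ a R`. Its proof rests on `orderHeight_le_one_of_colon`: a prime of the form `(a : c)` with
`a ≠ 0` and `c ∉ a R`, that is, an associated prime of `R / a R`, has height at most one.

Reflexivity carries this property over to modules. Reflexive modules are torsion-free, so `φ` is
injective because it is so at the generic point. For `n : N`, surjectivity at the generic point
gives `a ≠ 0` and `m : M` with `φ m = a • n`, and it must be shown that `m ∈ a M`. Surjectivity in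
codimension one shows that `m` is locally divisible by `a` there, hence so is `f m` for every
`f : M → R`; by the Hartogs property `f m` is divisible by `a`. The map `f ↦ f m / a` is then an
element of `M**`, hence evaluation at some `m'`, and `m = a • m'` because `M` embeds in `M**`.
-/

/-- In an integrally closed Noetherian domain a prime `p = (a : c)`, where `a ≠ 0`, has height at
most one: otherwise multiplication by `c / a` would preserve the finitely generated ideal `p`, so
that `c / a` would be integral over `R`, whence `c ∈ a R` and `p = R`. -/
theorem orderHeight_le_one_of_colon {R : Type*} [CommRing R] [IsDomain R] [IsNoetherianRing R]
    [IsIntegrallyClosed R] {a c : R} (ha : a ≠ 0) (p : Ideal R) [hp : p.IsPrime]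
    (hpc : ∀ x, x ∈ p ↔ a ∣ x * c) :
    Order.height (⟨p, hp⟩ : PrimeSpectrum R) ≤ 1 := by
  by_cases hcase : ∀ x ∈ p, ∀ y, x * c = a * y → y ∈ p
  · exfalso
    have haK : algebraMap R (FractionRing R) a ≠ 0 := by simpa using ha
    have hap : a ∈ p := (hpc a).2 (dvd_mul_right a c)
    have hint : IsIntegral R
        (algebraMap R (FractionRing R) c / algebraMap R (FractionRing R) a) := by
      refine isIntegral_of_smul_mem_submodule (M := FractionRing R)
        (Submodule.map (Algebra.linearMap R (FractionRing R)) p) ?_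
        ((IsNoetherian.noetherian p).map _) _ ?_
      · exact (Submodule.ne_bot_iff _).2 ⟨_, ⟨a, hap, rfl⟩, haK⟩
      · rintro _ ⟨x, hx, rfl⟩
        obtain ⟨y, hy⟩ := (hpc x).1 hx
        refine ⟨y, hcase x hx y hy, ?_⟩
        have hy' := congrArg (algebraMap R (FractionRing R)) hy
        simp only [map_mul] at hy'
        simp only [Algebra.linearMap_apply, smul_eq_mul]
        field_simp
        linear_combination -hy'
    obtain ⟨y, hy⟩ := IsIntegrallyClosed.algebraMap_eq_of_integral hint
    refine hp.ne_top ((Ideal.eq_top_iff_one p).2 ((hpc 1).2 ⟨y, ?_⟩))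
    apply IsFractionRing.injective R (FractionRing R)
    rw [one_mul, map_mul, hy, mul_div_cancel₀ _ haK]
  · push Not at hcase
    obtain ⟨x, hx, y, hxy, hy⟩ := hcase
    -- Here `x * c = a * y` with `y ∉ p`, so `p R_p` is generated by `x`; Krull's principal ideal
    -- theorem applies once `p` is known to be minimal over `x R`.
    have hmin : p ∈ (Ideal.span {x}).minimalPrimes := by
      refine ⟨⟨hp, (Ideal.span_singleton_le_iff_mem p).2 hx⟩, ?_⟩
      rintro q ⟨hq, hxq⟩ hqp z hz
      obtain ⟨w, hw⟩ := (hpc z).1 hz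
      have hzy : y * z = w * x := by
        apply mul_left_cancel₀ ha
        linear_combination (-z) * hxy + x * hw
      have hmem : y * z ∈ q :=
        hzy ▸ q.mul_mem_left w ((Ideal.span_singleton_le_iff_mem q).1 hxq)
      exact (hq.mem_or_mem hmem).resolve_left fun h ↦ hy (hqp h)
    have := Ideal.height_le_one_of_isPrincipal_of_mem_minimalPrimes _ p hmin
    rwa [← PrimeSpectrum.height_eq_orderHeight]

/-- The algebraic Hartogs property `R = ⋂ R_p` over primes `p` of height at most one, for an
integrally closed Noetherian domain: divisibility by `a ≠ 0` can be tested at these primes. -/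
theorem dvd_of_locally_dvd {R : Type*} [CommRing R] [IsDomain R] [IsNoetherianRing R]
    [IsIntegrallyClosed R] {a b : R} (ha : a ≠ 0)
    (h : ∀ (p : Ideal R) [hp : p.IsPrime],
      Order.height (⟨p, hp⟩ : PrimeSpectrum R) ≤ 1 → ∃ s ∉ p, a ∣ s * b) :
    a ∣ b := by
  by_contra hb
  have hdvd (r x : R) : r • Ideal.Quotient.mk (Ideal.span {a}) x = 0 ↔ a ∣ r * x := by
    rw [Algebra.smul_def, Ideal.Quotient.algebraMap_eq, ← map_mul, Ideal.Quotient.eq_zero_iff_mem,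
      Ideal.mem_span_singleton]
  have hb' : Ideal.Quotient.mk (Ideal.span {a}) b ≠ 0 := fun h0 ↦ hb <| by
    rwa [Ideal.Quotient.eq_zero_iff_mem, Ideal.mem_span_singleton] at h0
  obtain ⟨p, hpass, hle⟩ := exists_le_isAssociatedPrime_of_isNoetherianRing R _ hb'
  rw [isAssociatedPrime_iff] at hpass
  obtain ⟨hp, c, hc⟩ := hpass
  obtain ⟨c, rfl⟩ := Ideal.Quotient.mk_surjective c
  obtain ⟨s, hs, hsb⟩ := h p (orderHeight_le_one_of_colon ha p (c := c) fun x ↦ by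
    rw [hc, Submodule.mem_colon_singleton, Submodule.mem_bot, hdvd])
  exact hs (hle (by rwa [Submodule.mem_colon_singleton, Submodule.mem_bot, hdvd]))

theorem eq_of_smul_eq_of_eval_injective {R M : Type*} [CommRing R] [IsDomain R] [AddCommGroup M]
    [Module R M] (hM : Function.Injective (Module.Dual.eval R M)) {a : R} (ha : a ≠ 0) {x y : M}
    (hxy : a • x = a • y) : x = y := by
  refine hM (LinearMap.ext fun f ↦ mul_left_cancel₀ ha ?_)
  simpa using congrArg f hxy

/-- In a reflexive module over a domain, divisibility by `a ≠ 0` can be tested on functionals: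
dividing evaluation at `m` by `a` yields an element of the double dual. -/
theorem exists_smul_eq_of_dvd_dual {R M : Type*} [CommRing R] [IsDomain R] [AddCommGroup M]
    [Module R M] (hM : Function.Bijective (Module.Dual.eval R M)) {a : R} (ha : a ≠ 0) {m : M}
    (h : ∀ f : Module.Dual R M, a ∣ f m) : ∃ m' : M, a • m' = m := by
  choose g hg using h
  let G : Module.Dual R (Module.Dual R M) :=
    { toFun := g
      map_add' := fun f₁ f₂ ↦ mul_left_cancel₀ ha <| by
        rw [mul_add, ← hg, ← hg, ← hg, LinearMap.add_apply]
      map_smul' := fun r f ↦ mul_left_cancel₀ ha <| by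
        rw [RingHom.id_apply, smul_eq_mul, mul_left_comm, ← hg, ← hg, LinearMap.smul_apply,
          smul_eq_mul] }
  obtain ⟨m', hm'⟩ := hM.2 G
  refine ⟨m', hM.1 (LinearMap.ext fun f ↦ ?_)⟩
  rw [map_smul, hm', LinearMap.smul_apply, smul_eq_mul]
  exact (hg f).symm

theorem exists_smul_eq_zero_of_localized_injective {R M N : Type*} [CommRing R] [AddCommGroup M]
    [Module R M] [AddCommGroup N] [Module R N] (φ : M →ₗ[R] N) (S : Submonoid R)
    (h : Function.Injective (LocalizedModule.map S φ)) {m : M} (hm : φ m = 0) :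
    ∃ s ∈ S, s • m = 0 := by
  have h0 : LocalizedModule.mk m (1 : S) = LocalizedModule.mk 0 1 := h (by simp [hm])
  obtain ⟨u, hu⟩ := LocalizedModule.mk_eq.1 h0
  exact ⟨u, u.2, by simpa [Submonoid.smul_def] using hu⟩

theorem exists_eq_smul_of_localized_surjective {R M N : Type*} [CommRing R] [AddCommGroup M]
    [Module R M] [AddCommGroup N] [Module R N] (φ : M →ₗ[R] N) (S : Submonoid R)
    (h : Function.Surjective (LocalizedModule.map S φ)) (n : N) :
    ∃ s ∈ S, ∃ m, φ m = s • n := by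
  obtain ⟨x, hx⟩ := h (LocalizedModule.mk n 1)
  induction x with
  | _ m s =>
    rw [LocalizedModule.map_mk] at hx
    obtain ⟨u, hu⟩ := LocalizedModule.mk_eq.1 hx
    refine ⟨u * s, S.mul_mem u.2 s.2, (u : R) • m, ?_⟩
    simpa [Submonoid.smul_def, mul_smul] using hu


/-- Let `R` be a Noetherian integrally closed integral domain, and let `M`, `N`
be finitely generated `R`-modules whose evaluation maps `ev_M : M → M**` and `ev_N : N → N**`
are bijective (i.e. `M` and `N` are reflexive). If `φ : M →ₗ[R] N` is such that the localized
map `φ_p : M_p → N_p` is bijective for every prime ideal `p` of `R` of height at most `1`,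
then `φ` is bijective. -/
theorem bijective_of_reflexive_of_bijective_in_codim_one
    (R M N : Type*) [CommRing R] [IsDomain R] [IsNoetherianRing R] [IsIntegrallyClosed R]
    [AddCommGroup M] [Module R M] [Module.Finite R M]
    [AddCommGroup N] [Module R N] [Module.Finite R N]
    (hM : Function.Bijective (Module.Dual.eval R M))
    (hN : Function.Bijective (Module.Dual.eval R N))
    (φ : M →ₗ[R] N)
    (h : ∀ (p : Ideal R) [hp : p.IsPrime],
      Order.height (⟨p, hp⟩ : PrimeSpectrum R) ≤ 1 →
      Function.Bijective (LocalizedModule.map p.primeCompl φ)) :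
    Function.Bijective φ := by
  have hbot : Order.height (⟨⊥, Ideal.isPrime_bot⟩ : PrimeSpectrum R) ≤ 1 := by
    rw [← PrimeSpectrum.height_eq_orderHeight]
    simp
  have hgen := h ⊥ hbot
  have hinj : Function.Injective φ := by
    refine (injective_iff_map_eq_zero φ).2 fun m hm ↦ ?_
    obtain ⟨s, hs, hsm⟩ := exists_smul_eq_zero_of_localized_injective φ _ hgen.1 hm
    exact eq_of_smul_eq_of_eval_injective hM.1 (a := s) hs (by rw [hsm, smul_zero])
  refine ⟨hinj, fun n ↦ ?_⟩
  obtain ⟨a, ha, m, hm⟩ := exists_eq_smul_of_localized_surjective φ _ hgen.2 n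
  replace ha : a ≠ 0 := ha
  obtain ⟨m', rfl⟩ := exists_smul_eq_of_dvd_dual hM ha (m := m) fun f ↦ by
    refine dvd_of_locally_dvd ha fun p _ hp ↦ ?_
    obtain ⟨s, hs, k, hk⟩ := exists_eq_smul_of_localized_surjective φ _ (h p hp).2 n
    have hsk : s • m = a • k := hinj (by rw [map_smul, map_smul, hm, hk, smul_comm])
    exact ⟨s, hs, f k, by simpa using congrArg f hsk⟩
  exact ⟨m', eq_of_smul_eq_of_eval_injective hN.1 ha (by rw [← map_smul, hm])⟩
end

section
/- Let R be a Noetherian integrally closed integral domain and M a finitely generated R-module. Then the dual module Hom_R(M,R) is reflexive; that is, the evaluation map ev_{M*} : Hom_R(M,R) → Hom_R(Hom_R(Hom_R(M,R),R),R) is bijective. -/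
/-!
The map `ev_{M*}` is a split monomorphism with retraction the transpose of `ev_M`, so the point is
that this transpose is injective: a functional `φ` on `M**` vanishing on the image of `ev_M` is
zero. Since `R` is a domain, it suffices that `M** / ev_M(M)` is killed by a nonzero scalar.

A maximal linearly independent subfamily `m` of a finite generating family of `M` spans a free
submodule `N` with `r M ⊆ N` for some `r ≠ 0`, and the coordinates of `r x` in the basis `m` are
functionals `c i` on `M` (`exists_smul_eq_sum_dual`). Applying `f ∈ M*` to `r x = ∑ c i (x) m i`
gives `r f = ∑ f (m i) c i`, and then applying `g ∈ M**` gives `r g = ev_M (∑ g (c i) m i)`.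
-/

/-- A finite module over a domain has a "dual basis up to a nonzero scalar `r`". -/
theorem exists_smul_eq_sum_dual (R M : Type*) [CommRing R] [IsDomain R]
    [AddCommGroup M] [Module R M] [Module.Finite R M] :
    ∃ (n : ℕ) (s : Set (Fin n)) (_ : Fintype s) (m : s → M) (c : s → Module.Dual R M) (r : R),
      r ≠ 0 ∧ ∀ x, r • x = ∑ i, c i x • m i := by
  classical
  obtain ⟨n, v, hv⟩ := Module.Finite.exists_fin (R := R) (M := M)
  obtain ⟨s, hs, hmax⟩ := exists_maximal_linearIndepOn R v
  have hex : ∀ i, ∃ a : R, a ≠ 0 ∧ a • v i ∈ Submodule.span R (v '' s) := by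
    intro i
    by_cases hi : i ∈ s
    · exact ⟨1, one_ne_zero, by
        rw [one_smul]; exact Submodule.subset_span (Set.mem_image_of_mem v hi)⟩
    · exact hmax i hi
  choose a ha hmem using hex
  have hrange : Set.range (fun i : s => v i) = v '' s := (Set.image_eq_range v s).symm
  have hle : ∀ x : M, (∏ i, a i) • x ∈ Submodule.span R (Set.range fun i : s => v i) := by
    have : Submodule.span R (Set.range v) ≤
        (Submodule.span R (Set.range fun i : s => v i)).comap
          (LinearMap.lsmul R M (∏ i, a i)) := by
      rw [Submodule.span_le]
      rintro _ ⟨i, rfl⟩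
      change (∏ i, a i) • v i ∈ Submodule.span R (Set.range fun i : s => v i)
      rw [hrange, ← Finset.prod_erase_mul _ _ (Finset.mem_univ i), mul_smul]
      exact Submodule.smul_mem _ _ (hmem i)
    intro x
    exact this (hv ▸ Submodule.mem_top)
  let b := Module.Basis.span hs
  let L := (LinearMap.lsmul R M (∏ i, a i)).codRestrict _ hle
  refine ⟨n, s, inferInstance, fun i => v i, fun i => b.coord i ∘ₗ L, ∏ i, a i,
    Finset.prod_ne_zero_iff.2 fun i _ => ha i, fun x => ?_⟩
  have h := congrArg Subtype.val (b.sum_repr (L x))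
  rw [Submodule.coe_sum] at h
  refine h.symm.trans (Finset.sum_congr rfl fun i _ => ?_)
  exact congrArg (b.repr (L x) i • ·) (congrArg Subtype.val (Module.Basis.span_apply hs i))

/-- Let `R` be a Noetherian integrally closed integral domain and `M` a
finitely generated `R`-module. Then the dual module `Hom_R(M,R)` is reflexive; that is, the
evaluation map `ev_{M*} : Hom_R(M,R) → Hom_R(Hom_R(Hom_R(M,R),R),R)` is bijective. -/
theorem dual_reflexive
    (R M : Type*) [CommRing R] [IsDomain R] [IsNoetherianRing R] [IsIntegrallyClosed R]
    [AddCommGroup M] [Module R M] [Module.Finite R M] :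
    Function.Bijective (Module.Dual.eval R (Module.Dual R M)) := by
  obtain ⟨n, s, _, m, c, r, hr, hx⟩ := exists_smul_eq_sum_dual R M
  have hf : ∀ f : Module.Dual R M, r • f = ∑ i, f (m i) • c i := by
    intro f
    ext x
    have := congrArg f (hx x)
    simpa [mul_comm] using this
  have hg : ∀ g : Module.Dual R (Module.Dual R M),
      r • g = Module.Dual.eval R M (∑ i, g (c i) • m i) := by
    intro g
    ext f
    have := congrArg g (hf f)
    simpa [mul_comm] using this
  constructor
  · intro f f' h
    ext x
    exact LinearMap.congr_fun h (Module.Dual.eval R M x)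
  · intro φ
    refine ⟨φ ∘ₗ Module.Dual.eval R M, ?_⟩
    ext g
    -- Both sides agree on `r • g`, which lies in the image of `ev_M`.
    apply mul_left_cancel₀ hr
    rw [← smul_eq_mul, ← smul_eq_mul, ← map_smul, ← map_smul, hg g]
    rfl
end

section
/- Let R be a Noetherian integrally closed integral domain and M a finitely generated torsion-free R-module. Then for every prime ideal p of R of height at most 1, the localization at p of the evaluation map ev_M : M → Hom_R(Hom_R(M,R),R) is bijective. -/
/-!
The local ring `R_p` at a prime `p` of height at most one is a Noetherian integrally closed local
domain of dimension at most one, hence a principal ideal domain, so the finitely generated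
torsion-free module `M_p` is free of some rank `n`. Since `M` and `R ^ n` are finitely presented,
an isomorphism `M_p ≃ R_p ^ n` and its inverse lift, up to denominators, to maps
`φ : M → R ^ n` and `ψ : R ^ n → M` such that `ψ ∘ φ` is multiplication by some `s ∉ p`
(`exists_smul_factors_through_free`). As `R ^ n` is reflexive, naturality of the evaluation map
along `φ` and `ψ` shows that its kernel and cokernel on `M` are killed by `s`
(`smul_eq_zero_of_eval_eq_zero`, `exists_eval_eq_smul`), so it becomes bijective after localizing
at `p`.
-/

/-- The localization of a Noetherian integrally closed domain at a prime of height at most one is a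
field or a discrete valuation ring; both cases are covered by being a principal ideal ring. -/
theorem isPrincipalIdealRing_localization_of_height_le_one
    (R : Type*) [CommRing R] [IsDomain R] [IsNoetherianRing R] [IsIntegrallyClosed R]
    (p : Ideal R) [hp : p.IsPrime]
    (h : Order.height (⟨p, hp⟩ : PrimeSpectrum R) ≤ 1) :
    IsPrincipalIdealRing (Localization.AtPrime p) := by
  have : IsDomain (Localization.AtPrime p) :=
    IsLocalization.isDomain_localization p.primeCompl_le_nonZeroDivisors
  have : IsIntegrallyClosed (Localization.AtPrime p) :=
    isIntegrallyClosed_of_isLocalization _ p.primeCompl p.primeCompl_le_nonZeroDivisors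
  have : IsNoetherianRing (Localization.AtPrime p) :=
    IsLocalization.isNoetherianRing p.primeCompl _ inferInstance
  have : Ring.KrullDimLE 1 (Localization.AtPrime p) := by
    rw [Ring.krullDimLE_iff, IsLocalization.AtPrime.ringKrullDim_eq_height p]
    rw [← PrimeSpectrum.height_eq_orderHeight] at h
    exact_mod_cast h
  refine ((tfae_of_isNoetherianRing_of_isLocalRing_of_isDomain
    (Localization.AtPrime p)).out 0 3 rfl rfl).mpr ⟨inferInstance, fun P hP hP' => ?_⟩
  exact IsLocalRing.eq_maximalIdeal (Ideal.isMaximal_of_isPrime_of_ne_bot P hP)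

section

variable {R M F : Type*} [CommRing R] [AddCommGroup M] [Module R M] [AddCommGroup F] [Module R F]

theorem smul_eq_zero_of_eval_eq_zero {s : R} {φ : M →ₗ[R] F} {ψ : F →ₗ[R] M}
    (hM : ∀ m, ψ (φ m) = s • m) (hF : Function.Injective (Module.Dual.eval R F))
    {m : M} (hm : Module.Dual.eval R M m = 0) : s • m = 0 := by
  have : φ m = 0 := hF <| by
    ext f
    simpa using LinearMap.congr_fun hm (f ∘ₗ φ)
  rw [← hM, this, map_zero]

theorem exists_eval_eq_smul {s : R} {φ : M →ₗ[R] F} {ψ : F →ₗ[R] M}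
    (hM : ∀ m, ψ (φ m) = s • m) (hF : Function.Surjective (Module.Dual.eval R F))
    (x : Module.Dual R (Module.Dual R M)) : ∃ m, Module.Dual.eval R M m = s • x := by
  -- Push `x` forward along `φ**`, where it becomes the evaluation at some `y`.
  obtain ⟨y, hy⟩ := hF (φ.dualMap.dualMap x)
  refine ⟨ψ y, ?_⟩
  ext f
  have h := LinearMap.congr_fun hy (f ∘ₗ ψ)
  have h' : φ.dualMap (f ∘ₗ ψ) = s • f := by
    ext m
    simp [hM]
  rw [LinearMap.dualMap_apply, h', map_smul] at h
  simpa using h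

end

/-- If `S⁻¹M` is free of rank `n` over `S⁻¹R`, then multiplication by some element of `S` on `M`
factors through `R ^ n`: lift an isomorphism `S⁻¹M ≃ (S⁻¹R) ^ n` and its inverse to maps over `R`,
clearing denominators. -/
theorem exists_smul_factors_through_free
    {R M : Type*} [CommRing R] [IsDomain R] [IsNoetherianRing R]
    [AddCommGroup M] [Module R M] [Module.Finite R M] [Module.IsTorsionFree R M]
    (S : Submonoid R) (hS : S ≤ nonZeroDivisors R) {n : ℕ}
    (b : Module.Basis (Fin n) (Localization S) (LocalizedModule S M)) :
    ∃ s ∈ S, ∃ (φ : M →ₗ[R] (Fin n → R)) (ψ : (Fin n → R) →ₗ[R] M),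
      ∀ m, ψ (φ m) = s • m := by
  have : Module.FinitePresentation R M := Module.finitePresentation_of_finite R M
  let e := b.equivFun.restrictScalars R
  let f := LocalizedModule.mkLinearMap S M
  let g : (Fin n → R) →ₗ[R] (Fin n → Localization S) :=
    .pi fun i => Algebra.linearMap R (Localization S) ∘ₗ .proj i
  obtain ⟨φ, s, hφ⟩ :=
    Module.FinitePresentation.exists_lift_of_isLocalizedModule S g (e.toLinearMap ∘ₗ f)
  obtain ⟨ψ, t, hψ⟩ :=
    Module.FinitePresentation.exists_lift_of_isLocalizedModule S f (e.symm.toLinearMap ∘ₗ g)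
  refine ⟨t * s, (t * s).2, φ, ψ, fun m => ?_⟩
  have hφm : g (φ m) = (s : R) • e (f m) := LinearMap.congr_fun hφ m
  have hψm : f (ψ (φ m)) = (t : R) • e.symm (g (φ m)) := LinearMap.congr_fun hψ (φ m)
  -- The equation holds after localizing, so up to an element of `S`, which acts injectively.
  have key : f (ψ (φ m)) = f (((t : R) * s) • m) := by
    rw [hψm, hφm, map_smul, e.symm_apply_apply, map_smul, mul_smul]
  obtain ⟨c, hc⟩ := IsLocalizedModule.exists_of_eq (S := S) (f := f) key
  exact smul_right_injective M (nonZeroDivisors.ne_zero (hS c.2)) hc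

/-- Let `R` be a Noetherian integrally closed integral domain and `M` a
finitely generated torsion-free `R`-module. Then for every prime ideal `p` of `R` of height
at most `1`, the localization at `p` of the evaluation map
`ev_M : M → Hom_R(Hom_R(M,R),R)` is bijective. -/
theorem localized_eval_bijective_in_codim_one
    (R M : Type*) [CommRing R] [IsDomain R] [IsNoetherianRing R] [IsIntegrallyClosed R]
    [AddCommGroup M] [Module R M] [Module.Finite R M]
    (hM : ∀ r : R, r ≠ 0 → Function.Injective fun m : M => r • m) :
    ∀ (p : Ideal R) [hp : p.IsPrime],
      Order.height (⟨p, hp⟩ : PrimeSpectrum R) ≤ 1 →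
      Function.Bijective (LocalizedModule.map p.primeCompl (Module.Dual.eval R M)) := by
  intro p hp h
  have : Module.IsTorsionFree R M := ⟨fun r hr => hM r hr.ne_zero⟩
  have hS := p.primeCompl_le_nonZeroDivisors
  have : IsDomain (Localization p.primeCompl) := IsLocalization.isDomain_localization hS
  have : IsPrincipalIdealRing (Localization p.primeCompl) :=
    isPrincipalIdealRing_localization_of_height_le_one R p h
  obtain ⟨n, b⟩ := Module.basisOfFiniteTypeTorsionFree' (R := Localization p.primeCompl)
    (M := LocalizedModule p.primeCompl M)
  obtain ⟨s, hs, φ, ψ, hψφ⟩ := exists_smul_factors_through_free p.primeCompl hS b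
  have hF := Module.bijective_dual_eval R (Fin n → R)
  constructor
  · refine LocalizedModule.map_injective _ _ ((injective_iff_map_eq_zero _).mpr fun m hm => ?_)
    exact (smul_eq_zero_iff_right (nonZeroDivisors.ne_zero (hS hs))).mp
      (smul_eq_zero_of_eval_eq_zero hψφ hF.1 hm)
  · intro y
    induction y using LocalizedModule.induction_on with
    | _ x t =>
      obtain ⟨m, hm⟩ := exists_eval_eq_smul hψφ hF.2 x
      refine ⟨LocalizedModule.mk m (⟨s, hs⟩ * t), ?_⟩
      rw [LocalizedModule.map_mk, hm]
      exact LocalizedModule.mk_cancel_common_left ⟨s, hs⟩ t x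
end
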